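/- Let n, s be natural numbers with s ≥ 1 and let v : Fin s → ℤ^n be ℚ-linearly independent. Assume that the family (v i) is not unimodular, but that for every proper subset T ⊊ Fin s the subfamily (v i)_{i ∈ T} is unimodular. Then there exist q ∈ ℤ^n and a : Fin s → ℚ with 0 < a i < 1 for every i such that q = ∑ i, a i • v i. -/

import Mathlib

/-- The coercion of an integer lattice vector to a rational vector. -/
def castQ {n : ℕ} (x : Fin n → ℤ) : Fin n → ℚ := fun j => (x j : ℚ)

/-- A family of lattice vectors is unimodular if it is `ℚ`-linearly independent and the
subgroup of `ℤ^n` it generates equals the set of all lattice points lying in its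
`ℚ`-linear span. -/
def IsUnimodular {n : ℕ} {ι : Type*} (v : ι → Fin n → ℤ) : Prop :=
  LinearIndependent ℚ (fun i => castQ (v i)) ∧
  ∀ z : Fin n → ℤ,
    z ∈ Submodule.span ℤ (Set.range v) ↔
      castQ z ∈ Submodule.span ℚ (Set.range fun i => castQ (v i))

/-!
A lattice point in the rational span of `v` but outside its integral span can be translated by
integer combinations of the `v i` until all its coordinates lie in `[0, 1)`. If one of these
coordinates vanished, the translate would lie in the rational span of a proper subfamily, hence,
that subfamily being unimodular, in its integral span.
-/

section

variable {n : ℕ} {ι : Type*} {v : ι → Fin n → ℤ}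

theorem castQ_sub (x y : Fin n → ℤ) : castQ (x - y) = castQ x - castQ y := by
  ext j
  simp [castQ]

theorem castQ_sum_smul (v : ι → Fin n → ℤ) (t : Finset ι) (m : ι → ℤ) :
    castQ (∑ i ∈ t, m i • v i) = ∑ i ∈ t, (m i : ℚ) • castQ (v i) := by
  ext j
  simp [castQ]

theorem castQ_mem_span_of_mem_span {z : Fin n → ℤ} (hz : z ∈ Submodule.span ℤ (Set.range v)) :
    castQ z ∈ Submodule.span ℚ (Set.range fun i => castQ (v i)) := by
  obtain ⟨m, rfl⟩ := Finsupp.mem_span_range_iff_exists_finsupp.1 hz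
  rw [Finsupp.sum, castQ_sum_smul]
  exact Submodule.sum_smul_mem _ _ fun i _ => Submodule.subset_span ⟨i, rfl⟩

theorem exists_castQ_mem_span_notMem_span (hindep : LinearIndependent ℚ fun i => castQ (v i))
    (hnotuni : ¬ IsUnimodular v) :
    ∃ z : Fin n → ℤ, castQ z ∈ Submodule.span ℚ (Set.range fun i => castQ (v i)) ∧
      z ∉ Submodule.span ℤ (Set.range v) := by
  by_contra! hsat
  exact hnotuni ⟨hindep, fun z => ⟨castQ_mem_span_of_mem_span, hsat z⟩⟩

variable [Fintype ι]

theorem castQ_sub_sum_floor_smul {z : Fin n → ℤ} {c : ι → ℚ}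
    (hz : castQ z = ∑ i, c i • castQ (v i)) :
    castQ (z - ∑ i, ⌊c i⌋ • v i) = ∑ i, Int.fract (c i) • castQ (v i) := by
  simp only [castQ_sub, castQ_sum_smul, hz, ← Finset.sum_sub_distrib, ← sub_smul,
    Int.self_sub_floor]

theorem exists_notMem_span_castQ_eq_sum_Ico {z : Fin n → ℤ}
    (hz : castQ z ∈ Submodule.span ℚ (Set.range fun i => castQ (v i)))
    (hz_notMem : z ∉ Submodule.span ℤ (Set.range v)) :
    ∃ q ∉ Submodule.span ℤ (Set.range v), ∃ a : ι → ℚ,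
      (∀ i, a i ∈ Set.Ico 0 1) ∧ castQ q = ∑ i, a i • castQ (v i) := by
  obtain ⟨c, hc⟩ := (Submodule.mem_span_range_iff_exists_fun ℚ).1 hz
  have floor_mem : ∑ i, ⌊c i⌋ • v i ∈ Submodule.span ℤ (Set.range v) :=
    Submodule.sum_smul_mem _ _ fun i _ => Submodule.subset_span ⟨i, rfl⟩
  exact ⟨z - ∑ i, ⌊c i⌋ • v i, mt (Submodule.sub_mem_iff_left _ floor_mem).1 hz_notMem,
    fun i => Int.fract (c i), fun i => ⟨Int.fract_nonneg _, Int.fract_lt_one _⟩,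
    castQ_sub_sum_floor_smul hc.symm⟩

theorem mem_span_image_of_support_subset {T : Set ι} (hT : IsUnimodular fun i : T => v i)
    {q : Fin n → ℤ} {a : ι → ℚ} (ha : Function.support a ⊆ T)
    (hq : castQ q = ∑ i, a i • castQ (v i)) : q ∈ Submodule.span ℤ (v '' T) := by
  rw [Set.image_eq_range]
  refine (hT.2 q).2 (hq ▸ Submodule.sum_mem _ fun i _ => ?_)
  by_cases hi : a i = 0
  · simp [hi]
  · exact Submodule.smul_mem _ _ (Submodule.subset_span ⟨⟨i, ha hi⟩, rfl⟩)

end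

theorem stmt14 {n s : ℕ} (hs : 1 ≤ s) (v : Fin s → Fin n → ℤ)
    (hindep : LinearIndependent ℚ fun i => castQ (v i))
    (hnotuni : ¬ IsUnimodular v)
    (hproper : ∀ T : Set (Fin s), T ≠ Set.univ →
      IsUnimodular (fun i : T => v (i : Fin s))) :
    ∃ (q : Fin n → ℤ) (a : Fin s → ℚ), (∀ i, 0 < a i ∧ a i < 1) ∧
      castQ q = ∑ i, a i • castQ (v i) := by
  obtain ⟨z, hz, hz_notMem⟩ := exists_castQ_mem_span_notMem_span hindep hnotuni
  obtain ⟨q, hq_notMem, a, ha, hq⟩ := exists_notMem_span_castQ_eq_sum_Ico hz hz_notMem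
  refine ⟨q, a, fun i => ⟨(ha i).1.lt_of_ne' fun hai => hq_notMem ?_, (ha i).2⟩, hq⟩
  have support_ne_univ : Function.support a ≠ Set.univ :=
    (Set.ne_univ_iff_exists_notMem _).2 ⟨i, Function.notMem_support.2 hai⟩
  have hq_mem : q ∈ Submodule.span ℤ (v '' Function.support a) :=
    mem_span_image_of_support_subset (hproper _ support_ne_univ) subset_rfl hq
  exact Submodule.span_mono (Set.image_subset_range _ _) hq_mem
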